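/- arXiv:1506.06545 — 2 statements merged into one kernel-verified Lean document; each statement's English description precedes it below -/
import Mathlib

section
/- Fix (r,s) ∈ ℂ² and for τ ∈ ℍ set a₁(τ) = r + sτ; assume a₁(τ) ∉ Λ_τ. Define f(z;τ) = e^{2za₁η₁(τ) − 4πisz} σ(z−a₁|τ)/σ(z+a₁|τ). Then for z ∉ ±a₁ + Λ_τ, ∂/∂τ log f(z;τ) = (i/(4π))[ζ(z+a₁|τ) − ζ(z−a₁|τ) − 2η₁(τ)a₁ + 4πis]·[ζ(z−a₁|τ) + ζ(z+a₁|τ) − 2zη₁(τ)] + (i/(4π))[℘(z−a₁|τ) − ℘(z+a₁|τ)]. -/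
open Complex Filter Topology Asymptotics

noncomputable section

/-- membership in the lattice `Λ_τ = ℤ + τℤ`. -/
def InLattice (τ z : ℂ) : Prop := ∃ m n : ℤ, z = (m : ℂ) + (n : ℂ) * τ

/-- the half-period generators `ω₀ = 0, ω₁ = 1, ω₂ = τ, ω₃ = 1 + τ`. -/
def halfp (τ : ℂ) : Fin 4 → ℂ := ![0, 1, τ, 1 + τ]

/-- the Weierstrass elliptic function `℘(z|τ)`. -/
def wp (τ z : ℂ) : ℂ :=
  z⁻¹ ^ 2 + ∑' w : {w : ℤ × ℤ // w ≠ 0},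
    ((z - ((w.1.1 : ℂ) + (w.1.2 : ℂ) * τ))⁻¹ ^ 2 - ((w.1.1 : ℂ) + (w.1.2 : ℂ) * τ)⁻¹ ^ 2)

/-- `℘′(z|τ)`, the `z`-derivative of `℘`. -/
def wpd (τ z : ℂ) : ℂ := deriv (wp τ) z

/-- `℘″(z|τ)`. -/
def wpdd (τ z : ℂ) : ℂ := deriv (wpd τ) z

def e1 (τ : ℂ) : ℂ := wp τ (1 / 2)
def e2 (τ : ℂ) : ℂ := wp τ (τ / 2)
def e3 (τ : ℂ) : ℂ := wp τ ((1 + τ) / 2)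

def g2 (τ : ℂ) : ℂ := -4 * (e1 τ * e2 τ + e1 τ * e3 τ + e2 τ * e3 τ)

/-- `zeta` is the Weierstrass zeta function: for each `τ ∈ ℍ`, `zeta τ` is odd, satisfies
`∂ζ/∂z = -℘` off the lattice, and `ζ(z|τ) - 1/z → 0` as `z → 0`. -/
def IsWeierstrassZeta (zeta : ℂ → ℂ → ℂ) : Prop :=
  ∀ τ : ℂ, 0 < τ.im →
    (∀ z : ℂ, zeta τ (-z) = - zeta τ z) ∧
    (∀ z : ℂ, ¬ InLattice τ z → HasDerivAt (zeta τ) (- wp τ z) z) ∧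
    Tendsto (fun z => zeta τ z - z⁻¹) (𝓝[≠] (0 : ℂ)) (𝓝 0)

/-- `eta1 τ = ζ(z+1|τ) - ζ(z|τ)` is the first quasi-period. -/
def IsEta1 (zeta : ℂ → ℂ → ℂ) (eta1 : ℂ → ℂ) : Prop :=
  ∀ τ : ℂ, 0 < τ.im → ∀ z : ℂ, ¬ InLattice τ z →
    eta1 τ = zeta τ (z + 1) - zeta τ z

/-- `eta2 τ = ζ(z+τ|τ) - ζ(z|τ)` is the second quasi-period. -/
def IsEta2 (zeta : ℂ → ℂ → ℂ) (eta2 : ℂ → ℂ) : Prop :=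
  ∀ τ : ℂ, 0 < τ.im → ∀ z : ℂ, ¬ InLattice τ z →
    eta2 τ = zeta τ (z + τ) - zeta τ z

/-- `sigma` is the Weierstrass sigma function: entire, odd, with
`∂/∂z log σ = ζ` off the lattice and `σ(z|τ)/z → 1` as `z → 0`. -/
def IsWeierstrassSigma (zeta sigma : ℂ → ℂ → ℂ) : Prop :=
  ∀ τ : ℂ, 0 < τ.im →
    (∀ z : ℂ, sigma τ (-z) = - sigma τ z) ∧
    Differentiable ℂ (sigma τ) ∧
    (∀ z : ℂ, ¬ InLattice τ z → HasDerivAt (sigma τ) (zeta τ z * sigma τ z) z) ∧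
    Tendsto (fun z => sigma τ z / z) (𝓝[≠] (0 : ℂ)) (𝓝 1)

/-- the Hamiltonian system (142) for `(p(τ), A(τ))` on `V`. -/
def HamSystem (n : Fin 4 → ℂ) (zeta : ℂ → ℂ → ℂ) (eta1 : ℂ → ℂ)
    (V : Set ℂ) (p A : ℂ → ℂ) : Prop :=
  ∀ τ ∈ V,
    HasDerivAt p ((-Complex.I / (4 * (Real.pi : ℂ))) *
      (2 * A τ - zeta τ (2 * p τ) + 2 * p τ * eta1 τ)) τ ∧
    HasDerivAt A ((Complex.I / (4 * (Real.pi : ℂ))) *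
      ((2 * wp τ (2 * p τ) + 2 * eta1 τ) * A τ - (3 / 2) * wpd τ (2 * p τ)
        - ∑ k : Fin 4, n k * (n k + 1) * wpd τ (p τ + halfp τ k / 2))) τ

/-- the generalized Lamé potential `I(z;τ)`. -/
def Ipot (n : Fin 4 → ℂ) (zeta : ℂ → ℂ → ℂ) (A B p τ z : ℂ) : ℂ :=
  (∑ k : Fin 4, n k * (n k + 1) * wp τ (z + halfp τ k / 2))
    + (3 / 4) * (wp τ (z + p) + wp τ (z - p))
    + A * (zeta τ (z + p) - zeta τ (z - p)) + B

end

theorem jacobiTheta₂_fderiv_fst (z : ℂ) {τ : ℂ} (hτ : 0 < τ.im) :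
    jacobiTheta₂_fderiv z τ (1, 0) = jacobiTheta₂' z τ := by
  have h := (hasFDerivAt_jacobiTheta₂ z hτ).comp_hasDerivAt z
    ((hasDerivAt_id z).prodMk (hasDerivAt_const z τ))
  exact h.unique (hasDerivAt_jacobiTheta₂_fst z hτ)

/-- The heat equation for `jacobiTheta₂`: its second `z`-derivative is `4πi` times its
`τ`-derivative. -/
theorem hasDerivAt_jacobiTheta₂'_fst (z : ℂ) {τ : ℂ} (hτ : 0 < τ.im) :
    HasDerivAt (jacobiTheta₂' · τ)
      (4 * Real.pi * I * jacobiTheta₂_fderiv z τ (0, 1)) z := by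
  obtain ⟨S, hz⟩ := exists_gt |z.im|
  have hU : IsOpen {u : ℂ | |u.im| < S} :=
    (_root_.continuous_abs.comp continuous_im).isOpen_preimage _ isOpen_Iio
  have hu : Summable fun n : ℤ ↦
      2 * Real.pi * |(n : ℝ)| * Real.exp (-Real.pi * (τ.im * n ^ 2 - 2 * S * |(n : ℝ)|)) := by
    simpa [mul_assoc] using (summable_pow_mul_jacobiTheta₂_term_bound S hτ 1).mul_left (2 * Real.pi)
  have hterm (n : ℤ) (w : ℂ) : HasDerivAt (jacobiTheta₂'_term n · τ)
      (4 * Real.pi * I * jacobiTheta₂_term_fderiv n w τ (0, 1)) w := by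
    have h1 : HasDerivAt (fun w : ℂ ↦ 2 * Real.pi * I * n * w + Real.pi * I * n ^ 2 * τ)
        (2 * Real.pi * I * n) w := by
      simpa using ((hasDerivAt_id w).const_mul (2 * Real.pi * I * n : ℂ)).add_const
        (Real.pi * I * n ^ 2 * τ : ℂ)
    refine (h1.cexp.const_mul (2 * Real.pi * I * n : ℂ)).congr_deriv ?_
    simp [jacobiTheta₂_term_fderiv]
    ring
  have hbound (n : ℤ) (w : ℂ) (hw : w ∈ {u : ℂ | |u.im| < S}) : ‖jacobiTheta₂'_term n w τ‖ ≤
      2 * Real.pi * |(n : ℝ)| * Real.exp (-Real.pi * (τ.im * n ^ 2 - 2 * S * |(n : ℝ)|)) := by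
    simpa only [Int.cast_abs] using norm_jacobiTheta₂'_term_le hτ (le_of_lt hw) le_rfl n
  have hdiff (n : ℤ) : DifferentiableOn ℂ (jacobiTheta₂'_term n · τ) {u : ℂ | |u.im| < S} :=
    fun w _ ↦ (hterm n w).differentiableAt.differentiableWithinAt
  have hsum := hasSum_deriv_of_summable_norm hu hdiff hU hbound hz
  simp only [(hterm _ z).deriv] at hsum
  have hsum' := ((ContinuousLinearMap.apply ℂ ℂ ((0, 1) : ℂ × ℂ)).hasSum
    (hasSum_jacobiTheta₂_term_fderiv z hτ)).mul_left (4 * Real.pi * I : ℂ)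
  have hd := (differentiableOn_tsum_of_summable_norm hu hdiff hU hbound).differentiableAt
    (hU.mem_nhds hz)
  refine hd.hasDerivAt.congr_deriv ?_
  exact hsum.unique hsum'

theorem exists_jacobiTheta₂_ne_zero {τ : ℂ} (hτ : 0 < τ.im) : ∃ z, jacobiTheta₂ z τ ≠ 0 := by
  by_contra! h
  have hint : HasSum (fun n : ℤ ↦ ∫ x in (0 : ℝ)..1, jacobiTheta₂_term n x τ)
      (∫ x in (0 : ℝ)..1, jacobiTheta₂ x τ) := by
    refine intervalIntegral.hasSum_integral_of_dominated_convergence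
      (fun n _ ↦ Real.exp (-Real.pi * (τ.im * n ^ 2 - 2 * 0 * |(n : ℝ)|))) ?_ ?_ ?_ ?_ ?_
    · intro n
      unfold jacobiTheta₂_term
      exact Continuous.aestronglyMeasurable (by fun_prop)
    · intro n
      refine .of_forall fun x _ ↦ ?_
      simpa only [Int.cast_abs] using
        norm_jacobiTheta₂_term_le (S := 0) (z := x) hτ (by simp) le_rfl n
    · refine .of_forall fun x _ ↦ ?_
      simpa using summable_pow_mul_jacobiTheta₂_term_bound 0 hτ 0
    · simp
    · exact .of_forall fun x _ ↦ hasSum_jacobiTheta₂_term x hτ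
  simp only [h, intervalIntegral.integral_zero] at hint
  have hval (n : ℤ) (hn : n ≠ 0) : ∫ x in (0 : ℝ)..1, jacobiTheta₂_term n x τ = 0 := by
    have hc : (2 * Real.pi * I * n : ℂ) ≠ 0 := by simp [hn, Real.pi_ne_zero]
    simp only [jacobiTheta₂_term, Complex.exp_add]
    rw [intervalIntegral.integral_mul_const, integral_exp_mul_complex hc]
    have : cexp (2 * Real.pi * I * n) = 1 := by
      rw [mul_comm]; exact exp_int_mul_two_pi_mul_I n
    simp [this]
  have h0 := hint.unique (hasSum_single 0 hval)
  simp [jacobiTheta₂_term] at h0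

/-- The odd Jacobi theta function `∑ (-1)ⁿ exp (πi (n + 1/2)² τ + 2πi (n + 1/2) z)`. -/
noncomputable def oddTheta (τ z : ℂ) : ℂ :=
  cexp (Real.pi * I * z + Real.pi * I * τ / 4) * jacobiTheta₂ (z + (1 + τ) / 2) τ

/-- The `z`-derivative of `oddTheta`. -/
noncomputable def oddThetaDeriv (τ z : ℂ) : ℂ :=
  cexp (Real.pi * I * z + Real.pi * I * τ / 4) *
    (Real.pi * I * jacobiTheta₂ (z + (1 + τ) / 2) τ + jacobiTheta₂' (z + (1 + τ) / 2) τ)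

/-- The `τ`-derivative of `oddTheta`. -/
noncomputable def oddThetaTauDeriv (τ z : ℂ) : ℂ :=
  cexp (Real.pi * I * z + Real.pi * I * τ / 4) *
    (Real.pi * I / 4 * jacobiTheta₂ (z + (1 + τ) / 2) τ + jacobiTheta₂' (z + (1 + τ) / 2) τ / 2
      + jacobiTheta₂_fderiv (z + (1 + τ) / 2) τ (0, 1))

theorem oddTheta_add_one (τ z : ℂ) : oddTheta τ (z + 1) = -oddTheta τ z := by
  have h : cexp (Real.pi * I * (z + 1) + Real.pi * I * τ / 4) =
      -cexp (Real.pi * I * z + Real.pi * I * τ / 4) := by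
    rw [show Real.pi * I * (z + 1) + Real.pi * I * τ / 4 =
      Real.pi * I * z + Real.pi * I * τ / 4 + Real.pi * I by ring, Complex.exp_add, exp_pi_mul_I]
    ring
  rw [oddTheta, oddTheta, h, show z + 1 + (1 + τ) / 2 = z + (1 + τ) / 2 + 1 by ring,
    jacobiTheta₂_add_left]
  ring

theorem oddTheta_add_tau (τ z : ℂ) :
    oddTheta τ (z + τ) = -(cexp (-(2 * Real.pi * I * (z + τ / 2))) * oddTheta τ z) := by
  rw [oddTheta, oddTheta, show z + τ + (1 + τ) / 2 = z + (1 + τ) / 2 + τ by ring,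
    jacobiTheta₂_add_left', ← mul_assoc, ← mul_assoc, ← Complex.exp_add, ← Complex.exp_add,
    ← neg_mul, show Real.pi * I * (z + τ) + Real.pi * I * τ / 4 +
      -Real.pi * I * (τ + 2 * (z + (1 + τ) / 2)) = -(2 * Real.pi * I * (z + τ / 2)) +
      (Real.pi * I * z + Real.pi * I * τ / 4) - Real.pi * I by ring, exp_sub_pi_mul_I]

theorem oddTheta_zero (τ : ℂ) : oddTheta τ 0 = 0 := by
  have h := jacobiTheta₂_add_left' (-((1 + τ) / 2)) τ
  rw [← jacobiTheta₂_add_left, show -((1 + τ) / 2) + τ + 1 = (1 + τ) / 2 by ring,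
    jacobiTheta₂_neg_left, show -Real.pi * I * (τ + 2 * -((1 + τ) / 2)) = Real.pi * I by ring,
    exp_pi_mul_I] at h
  rw [oddTheta, zero_add]
  have : jacobiTheta₂ ((1 + τ) / 2) τ = 0 := by linear_combination h / 2
  simp [this]

theorem hasDerivAt_oddTheta {τ : ℂ} (hτ : 0 < τ.im) (z : ℂ) :
    HasDerivAt (oddTheta τ) (oddThetaDeriv τ z) z := by
  have h1 : HasDerivAt (fun w : ℂ ↦ Real.pi * I * w + Real.pi * I * τ / 4) (Real.pi * I) z := by
    simpa using ((hasDerivAt_id z).const_mul (Real.pi * I : ℂ)).add_const (Real.pi * I * τ / 4 : ℂ)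
  refine (h1.cexp.mul ((hasDerivAt_jacobiTheta₂_fst _ hτ).comp_add_const z
    ((1 + τ) / 2))).congr_deriv ?_
  rw [oddThetaDeriv]
  ring

/-- The heat equation for `oddTheta`. -/
theorem hasDerivAt_oddThetaDeriv {τ : ℂ} (hτ : 0 < τ.im) (z : ℂ) :
    HasDerivAt (oddThetaDeriv τ) (4 * Real.pi * I * oddThetaTauDeriv τ z) z := by
  have h1 : HasDerivAt (fun w : ℂ ↦ Real.pi * I * w + Real.pi * I * τ / 4) (Real.pi * I) z := by
    simpa using ((hasDerivAt_id z).const_mul (Real.pi * I : ℂ)).add_const (Real.pi * I * τ / 4 : ℂ)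
  have h2 := ((hasDerivAt_jacobiTheta₂_fst _ hτ).comp_add_const z ((1 + τ) / 2)).const_mul
    (Real.pi * I : ℂ)
  have h3 := (hasDerivAt_jacobiTheta₂'_fst _ hτ).comp_add_const z ((1 + τ) / 2)
  refine (h1.cexp.mul (h2.add h3)).congr_deriv ?_
  simp only [oddThetaTauDeriv, Pi.add_apply]
  ring

theorem hasDerivAt_oddTheta_along_line {τ : ℂ} (hτ : 0 < τ.im) (u v : ℂ) :
    HasDerivAt (fun t ↦ oddTheta t (u + v * t))
      (v * oddThetaDeriv τ (u + v * τ) + oddThetaTauDeriv τ (u + v * τ)) τ := by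
  have hl : HasDerivAt (fun t : ℂ ↦ u + v * t) v τ := by
    simpa using ((hasDerivAt_id τ).const_mul v).const_add u
  have h1 : HasDerivAt (fun t : ℂ ↦ Real.pi * I * (u + v * t) + Real.pi * I * t / 4)
      (Real.pi * I * v + Real.pi * I / 4) τ := by
    refine (hl.const_mul (Real.pi * I : ℂ)).add ?_
    simpa using ((hasDerivAt_id τ).const_mul (Real.pi * I : ℂ)).div_const 4
  have h2 : HasDerivAt (fun t : ℂ ↦ (u + v * t + (1 + t) / 2, t)) (v + 1 / 2, 1) τ := by
    refine (hl.add ?_).prodMk (hasDerivAt_id τ)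
    simpa using ((hasDerivAt_id τ).const_add 1).div_const (2 : ℂ)
  have h3 := HasFDerivAt.comp_hasDerivAt (f := fun t : ℂ ↦ (u + v * t + (1 + t) / 2, t)) τ
    (hasFDerivAt_jacobiTheta₂ (u + v * τ + (1 + τ) / 2) hτ) h2
  refine (h1.cexp.mul h3).congr_deriv ?_
  have h4 : ((v + 1 / 2, 1) : ℂ × ℂ) = (v + 1 / 2) • (1, 0) + (0, 1) := by simp
  rw [h4, map_add, map_smul, jacobiTheta₂_fderiv_fst _ hτ, oddThetaDeriv, oddThetaTauDeriv]
  simp only [Function.comp_apply, smul_eq_mul]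
  ring

theorem exists_oddTheta_ne_zero {τ : ℂ} (hτ : 0 < τ.im) : ∃ z, oddTheta τ z ≠ 0 := by
  obtain ⟨z, hz⟩ := exists_jacobiTheta₂_ne_zero hτ
  exact ⟨z - (1 + τ) / 2, by simpa [oddTheta] using hz⟩

/-- An entire function vanishing at the zeros of an entire function with only simple zeros is
divisible by it. -/
theorem exists_differentiable_mul_eq {f g : ℂ → ℂ} (hf : Differentiable ℂ f)
    (hg : Differentiable ℂ g) (h : ∀ z, g z = 0 → f z = 0 ∧ deriv g z ≠ 0) :
    ∃ q : ℂ → ℂ, Differentiable ℂ q ∧ ∀ z, f z = q z * g z := by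
  classical
  have hds {F : ℂ → ℂ} (hF : Differentiable ℂ F) (a : ℂ) : Differentiable ℂ (dslope F a) := by
    rw [← differentiableOn_univ, Complex.differentiableOn_dslope univ_mem, differentiableOn_univ]
    exact hF
  refine ⟨fun z ↦ if g z = 0 then deriv f z / deriv g z else f z / g z, fun a ↦ ?_, fun z ↦ ?_⟩
  · by_cases ha : g a = 0
    · have hga : dslope g a a ≠ 0 := by simpa using (h a ha).2
      have hquot : DifferentiableAt ℂ (fun z ↦ dslope f a z / dslope g a z) a :=
        (hds hf a a).div (hds hg a a) hga
      refine hquot.congr_of_eventuallyEq ?_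
      filter_upwards [(hds hg a).continuous.continuousAt.eventually_ne hga] with z hz
      rcases eq_or_ne z a with rfl | hza
      · simp [ha]
      · have hz' : z - a ≠ 0 := sub_ne_zero.2 hza
        rw [dslope_of_ne _ hza, slope_def_field, ha, sub_zero] at hz
        rw [dslope_of_ne _ hza, dslope_of_ne _ hza, slope_def_field, slope_def_field, ha,
          (h a ha).1, sub_zero, sub_zero]
        have : g z ≠ 0 := fun h0 ↦ hz (by simp [h0])
        rw [if_neg this]
        field_simp
    · refine ((hf a).div (hg a) ha).congr_of_eventuallyEq ?_
      filter_upwards [hg.continuous.continuousAt.eventually_ne ha] with z hz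
      simp [hz]
  · by_cases hz : g z = 0
    · simp [hz, (h z hz).1]
    · simp [hz]

/-- A continuous function on `ℂ` invariant under translation by `1` and `τ` is bounded. -/
theorem exists_le_of_doubly_periodic {τ : ℂ} (hτ : 0 < τ.im) {N : ℂ → ℝ} (hN : Continuous N)
    (h1 : Function.Periodic N 1) (h2 : Function.Periodic N τ) : ∃ M, ∀ z, N z ≤ M := by
  have hK : IsCompact ((fun p : ℝ × ℝ ↦ (p.1 + p.2 * τ : ℂ)) ''
      (Set.Icc 0 1 ×ˢ Set.Icc 0 1)) :=
    (isCompact_Icc.prod isCompact_Icc).image (by fun_prop)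
  obtain ⟨M, hM⟩ := hK.bddAbove_image hN.continuousOn
  refine ⟨M, fun z ↦ ?_⟩
  set y : ℝ := z.im / τ.im with hy
  set x : ℝ := z.re - y * τ.re with hx
  have hz : z = x + y * τ := by
    apply Complex.ext
    · simp [hx]
    · simp [hy, hτ.ne']
  have hred : N z = N (Int.fract x + Int.fract y * τ) := by
    rw [← (h1.int_mul ⌊x⌋) (Int.fract x + Int.fract y * τ), ← (h2.int_mul ⌊y⌋) (_ + ⌊x⌋ * 1)]
    congr 1
    have ex : (x : ℂ) = Int.fract x + ⌊x⌋ := by exact_mod_cast (Int.fract_add_floor x).symm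
    have ey : (y : ℂ) = Int.fract y + ⌊y⌋ := by exact_mod_cast (Int.fract_add_floor y).symm
    rw [hz]
    linear_combination ex + ey * τ
  rw [hred]
  refine hM ⟨_, ⟨(Int.fract x, Int.fract y), ⟨⟨Int.fract_nonneg _, (Int.fract_lt_one _).le⟩,
    ⟨Int.fract_nonneg _, (Int.fract_lt_one _).le⟩⟩, rfl⟩, rfl⟩

/-- An entire function whose norm is `1`-periodic and picks up a factor
`exp (-2πj Im (z + τ/2))` with `j ≥ 0` under translation by `τ` is constant. -/
theorem apply_eq_apply_of_norm_quasiperiodic {τ : ℂ} (hτ : 0 < τ.im) {F : ℂ → ℂ}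
    (hF : Differentiable ℂ F) {j : ℝ} (hj : 0 ≤ j) (h1 : ∀ z, ‖F (z + 1)‖ = ‖F z‖)
    (h2 : ∀ z, ‖F (z + τ)‖ = Real.exp (-(2 * Real.pi * j * (z + τ / 2).im)) * ‖F z‖) (z w : ℂ) :
    F z = F w := by
  obtain ⟨M, hM⟩ := exists_le_of_doubly_periodic hτ
    (N := fun z ↦ ‖F z‖ * Real.exp (Real.pi * j * z.im ^ 2 / τ.im))
    (by have := hF.continuous; fun_prop) (fun z ↦ by simp [h1]) (fun z ↦ by
      simp only [h2]
      rw [mul_comm (Real.exp _), mul_assoc, ← Real.exp_add]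
      congr 2
      have : τ.im ≠ 0 := hτ.ne'
      simp
      field_simp
      ring)
  refine hF.apply_eq_apply_of_bounded ?_ z w
  refine isBounded_iff_forall_norm_le.2 ⟨M, ?_⟩
  rintro _ ⟨u, rfl⟩
  refine le_trans ?_ (hM u)
  refine le_mul_of_one_le_right (norm_nonneg _) (Real.one_le_exp ?_)
  have := Real.pi_pos
  positivity

/-- The period pair `(1, τ)`. -/
noncomputable def upperHalfPeriodPair {τ : ℂ} (hτ : 0 < τ.im) : PeriodPair where
  ω₁ := 1
  ω₂ := τ
  indep := by
    rw [LinearIndependent.pair_iff]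
    intro s t h
    have him := congrArg Complex.im h
    have hre := congrArg Complex.re h
    simp [hτ.ne'] at him hre
    subst him
    simpa using hre

theorem mem_lattice_upperHalfPeriodPair {τ : ℂ} (hτ : 0 < τ.im) {z : ℂ} :
    z ∈ (upperHalfPeriodPair hτ).lattice ↔ InLattice τ z := by
  rw [PeriodPair.mem_lattice, InLattice]
  simp [upperHalfPeriodPair, eq_comm]

theorem wp_eq_weierstrassP {τ : ℂ} (hτ : 0 < τ.im) (z : ℂ) :
    wp τ z = (upperHalfPeriodPair hτ).weierstrassP z := by
  set L := upperHalfPeriodPair hτ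
  have hs := (L.latticeEquivProd.symm.toEquiv.hasSum_iff).2 (L.hasSum_weierstrassP z)
  rw [← hs.tsum_eq, ← hs.summable.tsum_subtype_add_tsum_subtype_compl {0},
    tsum_singleton, wp]
  simp only [Function.comp_apply, LinearEquiv.coe_toEquiv, PeriodPair.latticeEquiv_symm_apply]
  congr 1
  · simp
  · refine tsum_congr fun w ↦ ?_
    simp [L, upperHalfPeriodPair]

theorem wp_add_tau {τ : ℂ} (hτ : 0 < τ.im) (z : ℂ) : wp τ (z + τ) = wp τ z := by
  rw [wp_eq_weierstrassP hτ, wp_eq_weierstrassP hτ]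
  exact (upperHalfPeriodPair hτ).weierstrassP_add_coe z
    ⟨τ, (upperHalfPeriodPair hτ).ω₂_mem_lattice⟩

theorem countable_setOf_inLattice (τ : ℂ) : {z | InLattice τ z}.Countable := by
  refine (Set.countable_range fun p : ℤ × ℤ ↦ (p.1 + p.2 * τ : ℂ)).mono ?_
  rintro z ⟨m, n, rfl⟩
  exact ⟨(m, n), rfl⟩

theorem isOpen_setOf_not_inLattice {τ : ℂ} (hτ : 0 < τ.im) : IsOpen {z | ¬ InLattice τ z} := by
  have h : {z | ¬ InLattice τ z} = ((upperHalfPeriodPair hτ).lattice : Set ℂ)ᶜ := by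
    ext z
    simp [mem_lattice_upperHalfPeriodPair hτ]
  rw [h]
  exact (upperHalfPeriodPair hτ).isClosed_lattice.isOpen_compl

theorem isPreconnected_setOf_not_inLattice (τ : ℂ) : IsPreconnected {z | ¬ InLattice τ z} :=
  ((countable_setOf_inLattice τ).isConnected_compl_of_one_lt_rank (by simp)).isPreconnected

theorem dense_setOf_not_inLattice (τ : ℂ) : Dense {z | ¬ InLattice τ z} :=
  (countable_setOf_inLattice τ).dense_compl ℝ

theorem inLattice_add_iff {τ ω : ℂ} (hω : InLattice τ ω) (z : ℂ) :
    InLattice τ (z + ω) ↔ InLattice τ z := by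
  obtain ⟨a, b, rfl⟩ := hω
  constructor
  · rintro ⟨m, n, h⟩
    exact ⟨m - a, n - b, by push_cast; linear_combination h⟩
  · rintro ⟨m, n, rfl⟩
    exact ⟨m + a, n + b, by push_cast; ring⟩

theorem not_inLattice_half_one {τ : ℂ} (hτ : 0 < τ.im) : ¬ InLattice τ (1 / 2) :=
  fun h ↦ (upperHalfPeriodPair hτ).ω₁_div_two_notMem_lattice
    ((mem_lattice_upperHalfPeriodPair hτ).2 h)

theorem not_inLattice_half_tau {τ : ℂ} (hτ : 0 < τ.im) : ¬ InLattice τ (τ / 2) :=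
  fun h ↦ (upperHalfPeriodPair hτ).ω₂_div_two_notMem_lattice
    ((mem_lattice_upperHalfPeriodPair hτ).2 h)

theorem inLattice_one (τ : ℂ) : InLattice τ 1 := ⟨1, 0, by simp⟩

theorem inLattice_tau (τ : ℂ) : InLattice τ τ := ⟨0, 1, by simp⟩

theorem not_inLattice_neg {τ z : ℂ} (h : ¬ InLattice τ z) : ¬ InLattice τ (-z) := by
  rintro ⟨m, n, h'⟩
  exact h ⟨-m, -n, by push_cast; linear_combination -h'⟩

section WeierstrassFunctions

variable {zeta sigma : ℂ → ℂ → ℂ} {τ : ℂ}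

theorem IsWeierstrassZeta.exists_add_tau (hzeta : IsWeierstrassZeta zeta) (hτ : 0 < τ.im) :
    ∃ η, ∀ z, ¬ InLattice τ z → zeta τ (z + τ) = zeta τ z + η := by
  obtain ⟨-, hd, -⟩ := hzeta τ hτ
  have hderiv (z : ℂ) (hz : ¬ InLattice τ z) :
      HasDerivAt (fun z ↦ zeta τ (z + τ) - zeta τ z) 0 z := by
    have hz' : ¬ InLattice τ (z + τ) := (inLattice_add_iff (inLattice_tau τ) z).not.2 hz
    refine (((hd _ hz').comp_add_const z τ).sub (hd z hz)).congr_deriv ?_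
    rw [wp_add_tau hτ]
    ring
  obtain ⟨η, hη⟩ := (isOpen_setOf_not_inLattice hτ).exists_is_const_of_deriv_eq_zero
    (isPreconnected_setOf_not_inLattice τ)
    (fun z hz ↦ (hderiv z hz).differentiableAt.differentiableWithinAt)
    (fun z hz ↦ (hderiv z hz).deriv)
  exact ⟨η, fun z hz ↦ by rw [← hη z hz]; ring⟩

theorem IsWeierstrassSigma.apply_zero (hsigma : IsWeierstrassSigma zeta sigma)
    (hτ : 0 < τ.im) : sigma τ 0 = 0 := by
  have h := (hsigma τ hτ).1 0
  rw [neg_zero] at h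
  linear_combination h / 2

theorem IsWeierstrassSigma.ne_zero (hzeta : IsWeierstrassZeta zeta)
    (hsigma : IsWeierstrassSigma zeta sigma) (hτ : 0 < τ.im) {z : ℂ} (hz : ¬ InLattice τ z) :
    sigma τ z ≠ 0 := by
  obtain ⟨-, hs, hd, hlim⟩ := hsigma τ hτ
  intro h0
  have hU := (isOpen_setOf_not_inLattice hτ).mem_nhds hz
  have hzan : AnalyticAt ℂ (zeta τ) z :=
    DifferentiableOn.analyticAt
      (fun w hw ↦ ((hzeta τ hτ).2.1 w hw).differentiableAt.differentiableWithinAt) hU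
  have hsan : AnalyticAt ℂ (sigma τ) z := hs.analyticAt z
  have horder := hsan.analyticOrderAt_deriv_add_one
  have hderiv : deriv (sigma τ) =ᶠ[𝓝 z] zeta τ * sigma τ := by
    filter_upwards [hU] with w hw using (hd w hw).deriv
  simp only [h0, sub_zero] at horder
  rw [analyticOrderAt_congr hderiv, analyticOrderAt_mul hzan hsan] at horder
  have htop : analyticOrderAt (sigma τ) z = ⊤ := by
    by_contra hne
    have hle : analyticOrderAt (sigma τ) z + 1 ≤ analyticOrderAt (sigma τ) z := by
      conv_rhs => rw [← horder]
      gcongr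
      exact le_add_self
    exact absurd hle (not_le.2 (ENat.lt_add_one_iff hne |>.2 le_rfl))
  rw [analyticOrderAt_eq_top] at htop
  have hzero : sigma τ = fun _ ↦ 0 :=
    AnalyticOnNhd.eq_of_eventuallyEq (fun w _ ↦ hs.analyticAt w) (fun w _ ↦ analyticAt_const) htop
  rw [hzero] at hlim
  simp only [zero_div] at hlim
  exact zero_ne_one (tendsto_nhds_unique tendsto_const_nhds hlim)

theorem IsWeierstrassSigma.add_period (hzeta : IsWeierstrassZeta zeta)
    (hsigma : IsWeierstrassSigma zeta sigma) (hτ : 0 < τ.im) {ω η : ℂ} (hω : InLattice τ ω)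
    (hω2 : ¬ InLattice τ (ω / 2))
    (hη : ∀ z, ¬ InLattice τ z → zeta τ (z + ω) = zeta τ z + η) (z : ℂ) :
    sigma τ (z + ω) = -(cexp (η * (z + ω / 2)) * sigma τ z) := by
  obtain ⟨hodd, hs, hd, -⟩ := hsigma τ hτ
  have hderiv (w : ℂ) (hw : ¬ InLattice τ w) :
      HasDerivAt (fun w ↦ sigma τ (w + ω) * cexp (-(η * w)) / sigma τ w) 0 w := by
    have hw' : ¬ InLattice τ (w + ω) := (inLattice_add_iff hω w).not.2 hw
    have hne := hsigma.ne_zero hzeta hτ hw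
    have hlin : HasDerivAt (fun w ↦ -(η * w)) (-η) w :=
      ((hasDerivAt_id w).const_mul η).neg.congr_deriv (by simp)
    refine ((((hd _ hw').comp_add_const w ω).mul hlin.cexp).div (hd w hw) hne).congr_deriv ?_
    rw [hη w hw]
    simp only [Pi.mul_apply]
    field_simp
    ring
  have hω2' := not_inLattice_neg hω2
  have hconst {w : ℂ} (hw : ¬ InLattice τ w) :=
    (isOpen_setOf_not_inLattice hτ).is_const_of_deriv_eq_zero
      (isPreconnected_setOf_not_inLattice τ)
      (fun w hw ↦ (hderiv w hw).differentiableAt.differentiableWithinAt)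
      (fun w hw ↦ (hderiv w hw).deriv) hw hω2'
  refine congrFun (Continuous.ext_on (dense_setOf_not_inLattice τ)
    (f := fun z ↦ sigma τ (z + ω)) (g := fun z ↦ -(cexp (η * (z + ω / 2)) * sigma τ z))
    (by have := hs.continuous; fun_prop) (by have := hs.continuous; fun_prop) fun w hw ↦ ?_) z
  have h := hconst hw
  have hne := hsigma.ne_zero hzeta hτ hw
  have hne2 := hsigma.ne_zero hzeta hτ hω2
  rw [show -(ω / 2) + ω = ω / 2 by ring, hodd, div_neg, mul_div_cancel_left₀ _ hne2,
    div_eq_iff hne] at h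
  have h' := congrArg (· * cexp (η * w)) h
  simp only [mul_assoc, ← Complex.exp_add, neg_add_cancel, Complex.exp_zero, mul_one] at h'
  simp only [h', mul_add, Complex.exp_add]
  ring_nf

theorem IsWeierstrassSigma.hasDerivAt_zero (hsigma : IsWeierstrassSigma zeta sigma)
    (hτ : 0 < τ.im) : HasDerivAt (sigma τ) 1 0 := by
  rw [hasDerivAt_iff_tendsto_slope]
  refine (hsigma τ hτ).2.2.2.congr fun z ↦ ?_
  rw [slope_def_field, hsigma.apply_zero hτ, sub_zero, sub_zero]

/-- A property invariant under translation by `1` and `τ` holds on `Λ_τ` if it holds at `0`. -/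
theorem InLattice.of_periodic {P : ℂ → Prop} (h1 : ∀ z, P (z + 1) ↔ P z)
    (h2 : ∀ z, P (z + τ) ↔ P z) (h0 : P 0) {z : ℂ} (hz : InLattice τ z) : P z := by
  obtain ⟨m, n, rfl⟩ := hz
  have p1 : Function.Periodic P 1 := fun z ↦ propext (h1 z)
  have p2 : Function.Periodic P τ := fun z ↦ propext (h2 z)
  have hm := p1.int_mul m 0
  rw [zero_add, mul_one] at hm
  rw [p2.int_mul n, hm]
  exact h0

theorem simple_zero_add_iff {f : ℂ → ℂ} (hf : Differentiable ℂ f) {η ω : ℂ}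
    (h : ∀ z, f (z + ω) = -(cexp (η * (z + ω / 2)) * f z)) (z : ℂ) :
    (f (z + ω) = 0 ∧ deriv f (z + ω) ≠ 0) ↔ (f z = 0 ∧ deriv f z ≠ 0) := by
  have hzero : f (z + ω) = 0 ↔ f z = 0 := by simp [h]
  rw [hzero, and_congr_right_iff]
  intro hz
  have hd : deriv f (z + ω) = -(cexp (η * (z + ω / 2)) * deriv f z) := by
    have hlin : HasDerivAt (fun w ↦ η * (w + ω / 2)) η z := by
      simpa using ((hasDerivAt_id z).add_const (ω / 2)).const_mul η
    have h1 := (hlin.cexp.mul (hf z).hasDerivAt).neg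
    have h2 := (hf (z + ω)).hasDerivAt.comp_add_const z ω
    rw [funext h] at h2
    rw [h2.unique h1, hz]
    ring
  simp [hd]

theorem IsWeierstrassSigma.deriv_ne_zero (hsigma : IsWeierstrassSigma zeta sigma)
    (hτ : 0 < τ.im) {η₁ η₂ : ℂ}
    (h1 : ∀ z, sigma τ (z + 1) = -(cexp (η₁ * (z + 1 / 2)) * sigma τ z))
    (h2 : ∀ z, sigma τ (z + τ) = -(cexp (η₂ * (z + τ / 2)) * sigma τ z))
    {z : ℂ} (hz : InLattice τ z) : deriv (sigma τ) z ≠ 0 := by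
  have hs := (hsigma τ hτ).2.1
  have h0 : sigma τ 0 = 0 ∧ deriv (sigma τ) 0 ≠ 0 :=
    ⟨hsigma.apply_zero hτ, by simp [(hsigma.hasDerivAt_zero hτ).deriv]⟩
  exact (InLattice.of_periodic (P := fun z ↦ sigma τ z = 0 ∧ deriv (sigma τ) z ≠ 0)
    (simple_zero_add_iff hs h1) (simple_zero_add_iff hs h2) h0 hz).2

theorem oddTheta_eq_zero_of_inLattice {z : ℂ} (hz : InLattice τ z) : oddTheta τ z = 0 := by
  refine InLattice.of_periodic (P := fun z ↦ oddTheta τ z = 0) (fun z ↦ ?_) (fun z ↦ ?_)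
    (oddTheta_zero τ) hz
  · simp [oddTheta_add_one]
  · simp [oddTheta_add_tau]

theorem differentiable_oddTheta (hτ : 0 < τ.im) : Differentiable ℂ (oddTheta τ) :=
  fun z ↦ (hasDerivAt_oddTheta hτ z).differentiableAt

/-- The sigma function is a Gaussian multiple of the odd theta function. -/
theorem IsWeierstrassSigma.exists_eq_exp_mul_oddTheta (hzeta : IsWeierstrassZeta zeta)
    (hsigma : IsWeierstrassSigma zeta sigma) (hτ : 0 < τ.im) {η : ℂ}
    (hη : ∀ z, ¬ InLattice τ z → zeta τ (z + 1) = zeta τ z + η) :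
    ∃ c ≠ 0, ∀ z, sigma τ z = c * (cexp (η * z ^ 2 / 2) * oddTheta τ z) := by
  obtain ⟨η₂, hη₂⟩ := hzeta.exists_add_tau hτ
  have h1 := hsigma.add_period hzeta hτ (inLattice_one τ) (not_inLattice_half_one hτ) hη
  have h2 := hsigma.add_period hzeta hτ (inLattice_tau τ) (not_inLattice_half_tau hτ) hη₂
  have hs := (hsigma τ hτ).2.1
  have hhalf := hsigma.ne_zero hzeta hτ (not_inLattice_half_one hτ)
  obtain ⟨k, hk⟩ : ∃ k : ℤ, η * τ - η₂ = k * (2 * Real.pi * I) := by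
    rw [← Complex.exp_eq_one_iff]
    have ha := h1 (1 / 2 + τ)
    have hb := h2 (1 / 2 + 1)
    rw [h2] at ha
    rw [h1, show (1 / 2 + 1 + τ : ℂ) = 1 / 2 + τ + 1 by ring, ha] at hb
    simp only [mul_neg, neg_neg, ← mul_assoc, ← Complex.exp_add] at hb
    have hb' := mul_right_cancel₀ hhalf hb
    rw [← div_eq_one_iff_eq (Complex.exp_ne_zero _), ← Complex.exp_sub] at hb'
    rw [← hb']
    ring_nf
  set g : ℂ → ℂ := fun z ↦ cexp (-(η * z ^ 2 / 2)) * sigma τ z with hg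
  have hgd : Differentiable ℂ g := by fun_prop
  have hg1 (z : ℂ) : g (z + 1) = -g z := by
    simp only [hg, h1, mul_neg, ← mul_assoc, ← Complex.exp_add]
    ring_nf
  have hg2 (z : ℂ) : g (z + τ) = -(cexp (-(k * (2 * Real.pi * I) * (z + τ / 2))) * g z) := by
    simp only [hg, h2, mul_neg, ← mul_assoc, ← Complex.exp_add, ← hk]
    ring_nf
  have hnorm (l : ℤ) (z : ℂ) : ‖cexp (-(l * (2 * Real.pi * I) * (z + τ / 2)))‖ =
      Real.exp (2 * Real.pi * l * (z + τ / 2).im) := by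
    rw [Complex.norm_exp, show -(l * (2 * Real.pi * I) * (z + τ / 2)) =
      ((-(2 * Real.pi * l) : ℝ) : ℂ) * (z + τ / 2) * I by push_cast; ring,
      Complex.mul_I_re, Complex.im_ofReal_mul]
    ring_nf
  rcases le_or_gt k 0 with hk0 | hk0
  · have hconst := apply_eq_apply_of_norm_quasiperiodic hτ hgd (j := -k)
      (by exact_mod_cast neg_nonneg.2 hk0) (fun z ↦ by rw [hg1, norm_neg])
      (fun z ↦ by rw [hg2, norm_neg, norm_mul, hnorm]; ring_nf)
    have h := hg1 (1 / 2)
    rw [hconst (1 / 2 + 1) (1 / 2)] at h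
    have h0 : g (1 / 2) = 0 := by linear_combination h / 2
    exact absurd h0 (mul_ne_zero (Complex.exp_ne_zero _) hhalf)
  have hgzero {z : ℂ} (hz : ¬ InLattice τ z) : g z ≠ 0 :=
    mul_ne_zero (Complex.exp_ne_zero _) (hsigma.ne_zero hzeta hτ hz)
  obtain ⟨q, hq, hqS⟩ := exists_differentiable_mul_eq (differentiable_oddTheta hτ) hs
    (fun z hz ↦ by
      have hzL : InLattice τ z := by
        by_contra hzL
        exact hsigma.ne_zero hzeta hτ hzL hz
      exact ⟨oddTheta_eq_zero_of_inLattice hzL, hsigma.deriv_ne_zero hτ h1 h2 hzL⟩)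
  obtain ⟨h, hhd, hhg⟩ : ∃ h : ℂ → ℂ, Differentiable ℂ h ∧ ∀ z, oddTheta τ z = h z * g z := by
    refine ⟨fun z ↦ q z * cexp (η * z ^ 2 / 2), by fun_prop, fun z ↦ ?_⟩
    rw [hqS, hg]
    simp only
    rw [mul_mul_mul_comm, ← mul_assoc, mul_assoc (q z), ← Complex.exp_add]
    simp
  have hhc : Continuous h := hhd.continuous
  have hh1 : (fun z ↦ ‖h (z + 1)‖) = fun z ↦ ‖h z‖ := by
    refine Continuous.ext_on (dense_setOf_not_inLattice τ) (by fun_prop) (by fun_prop)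
      fun z hz ↦ ?_
    have e := oddTheta_add_one τ z
    rw [hhg, hhg, hg1, mul_neg, neg_inj] at e
    simp only [mul_right_cancel₀ (hgzero hz) e]
  have hh2 : (fun z ↦ ‖h (z + τ)‖) = fun z ↦
      Real.exp (-(2 * Real.pi * ((k - 1 : ℤ) : ℝ) * (z + τ / 2).im)) * ‖h z‖ := by
    refine Continuous.ext_on (dense_setOf_not_inLattice τ) (by fun_prop) (by fun_prop)
      fun z hz ↦ ?_
    have e := oddTheta_add_tau τ z
    rw [hhg, hhg, hg2, mul_neg, neg_inj, ← mul_assoc,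
      ← mul_assoc (cexp (-(2 * Real.pi * I * (z + τ / 2))))] at e
    have e' := congrArg norm (mul_right_cancel₀ (hgzero hz) e)
    have hn1 := hnorm 1 z
    rw [Int.cast_one, one_mul] at hn1
    rw [norm_mul, norm_mul, hnorm, hn1, ← eq_div_iff (Real.exp_ne_zero _)] at e'
    simp only [e']
    rw [mul_div_right_comm, ← Real.exp_sub]
    push_cast
    ring_nf
  have hconst := apply_eq_apply_of_norm_quasiperiodic hτ hhd (j := ((k - 1 : ℤ) : ℝ))
    (by exact_mod_cast (by lia : 0 ≤ k - 1)) (congrFun hh1) (congrFun hh2)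
  have hne : h 0 ≠ 0 := by
    obtain ⟨z, hz⟩ := exists_oddTheta_ne_zero hτ
    rw [hhg, hconst z 0] at hz
    exact left_ne_zero_of_mul hz
  refine ⟨(h 0)⁻¹, inv_ne_zero hne, fun z ↦ ?_⟩
  rw [hhg, hconst z 0, eq_inv_mul_iff_mul_eq₀ hne, hg]
  simp only
  rw [mul_left_comm, ← mul_assoc (cexp (η * z ^ 2 / 2)), ← Complex.exp_add]
  simp

/-- The first logarithmic derivative of the odd theta function. -/
theorem oddThetaDeriv_eq (hsigma : IsWeierstrassSigma zeta sigma) (hτ : 0 < τ.im) {c η : ℂ}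
    (hc : c ≠ 0) (h : ∀ z, sigma τ z = c * (cexp (η * z ^ 2 / 2) * oddTheta τ z)) {z : ℂ}
    (hz : ¬ InLattice τ z) : oddThetaDeriv τ z = (zeta τ z - η * z) * oddTheta τ z := by
  have h1 := (hsigma τ hτ).2.2.1 z hz
  have hlin : HasDerivAt (fun w ↦ η * w ^ 2 / 2) (η * z) z := by
    refine (((hasDerivAt_pow 2 z).const_mul η).div_const 2).congr_deriv ?_
    simp
    ring
  have h2 := (hlin.cexp.mul (hasDerivAt_oddTheta hτ z)).const_mul c
  rw [funext h] at h1
  have h3 := h1.unique h2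
  rw [mul_left_comm] at h3
  have h4 := mul_left_cancel₀ hc h3
  apply mul_left_cancel₀ (Complex.exp_ne_zero (η * z ^ 2 / 2))
  linear_combination -h4

/-- The second `z`-derivative of the odd theta function, rewritten by the heat equation. -/
theorem oddThetaTauDeriv_eq (hzeta : IsWeierstrassZeta zeta)
    (hsigma : IsWeierstrassSigma zeta sigma) (hτ : 0 < τ.im) {c η : ℂ}
    (hc : c ≠ 0) (h : ∀ z, sigma τ z = c * (cexp (η * z ^ 2 / 2) * oddTheta τ z)) {z : ℂ}
    (hz : ¬ InLattice τ z) : 4 * Real.pi * I * oddThetaTauDeriv τ z =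
      ((zeta τ z - η * z) ^ 2 - wp τ z - η) * oddTheta τ z := by
  have heq : oddThetaDeriv τ =ᶠ[𝓝 z] fun w ↦ (zeta τ w - η * w) * oddTheta τ w := by
    filter_upwards [(isOpen_setOf_not_inLattice hτ).mem_nhds hz] with w hw
      using oddThetaDeriv_eq hsigma hτ hc h hw
  have hlin : HasDerivAt (fun w ↦ η * w) η z := by
    simpa using (hasDerivAt_id z).const_mul η
  have h1 := (((hzeta τ hτ).2.1 z hz).sub hlin).mul (hasDerivAt_oddTheta hτ z)
  have h2 := (hasDerivAt_oddThetaDeriv hτ z).unique (h1.congr_of_eventuallyEq heq)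
  rw [h2, oddThetaDeriv_eq hsigma hτ hc h hz]
  simp only [Pi.sub_apply]
  ring

end WeierstrassFunctions

/-- formula (173): the `τ`-logarithmic derivative of
`f(z;τ) = e^{2za₁η₁ - 4πisz} σ(z-a₁)/σ(z+a₁)` with `a₁ = r + sτ`, stated in the form
`∂f/∂τ = (∂/∂τ log f) · f`. -/
theorem tau_deriv_log_f
    (r s : ℂ)
    (zeta sigma : ℂ → ℂ → ℂ) (eta1 : ℂ → ℂ)
    (hzeta : IsWeierstrassZeta zeta) (hsigma : IsWeierstrassSigma zeta sigma)
    (heta1 : IsEta1 zeta eta1) :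
    ∀ τ : ℂ, 0 < τ.im → ¬ InLattice τ (r + s * τ) →
    ∀ z : ℂ, ¬ InLattice τ (z - (r + s * τ)) → ¬ InLattice τ (z + (r + s * τ)) →
    HasDerivAt
      (fun t => Complex.exp (2 * z * (r + s * t) * eta1 t
          - 4 * (Real.pi : ℂ) * Complex.I * s * z)
        * sigma t (z - (r + s * t)) / sigma t (z + (r + s * t)))
      ((((Complex.I / (4 * (Real.pi : ℂ))) *
          ((zeta τ (z + (r + s * τ)) - zeta τ (z - (r + s * τ))
              - 2 * eta1 τ * (r + s * τ) + 4 * (Real.pi : ℂ) * Complex.I * s)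
            * (zeta τ (z - (r + s * τ)) + zeta τ (z + (r + s * τ)) - 2 * z * eta1 τ)))
        + (Complex.I / (4 * (Real.pi : ℂ))) *
            (wp τ (z - (r + s * τ)) - wp τ (z + (r + s * τ))))
        * (Complex.exp (2 * z * (r + s * τ) * eta1 τ
            - 4 * (Real.pi : ℂ) * Complex.I * s * z)
          * sigma τ (z - (r + s * τ)) / sigma τ (z + (r + s * τ)))) τ := by
  intro τ hτ _ z hzm hzp
  have hquasi {t : ℂ} (ht : 0 < t.im) (w : ℂ) (hw : ¬ InLattice t w) :
      zeta t (w + 1) = zeta t w + eta1 t := by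
    rw [heta1 t ht w hw]
    ring
  obtain ⟨c, hc, hσ⟩ := hsigma.exists_eq_exp_mul_oddTheta hzeta hτ (hquasi hτ)
  have hne {w : ℂ} (hw : ¬ InLattice τ w) : oddTheta τ w ≠ 0 := by
    have h := hsigma.ne_zero hzeta hτ hw
    rw [hσ] at h
    exact right_ne_zero_of_mul (right_ne_zero_of_mul h)
  have hf (t : ℂ) (ht : 0 < t.im) : Complex.exp (2 * z * (r + s * t) * eta1 t
          - 4 * (Real.pi : ℂ) * Complex.I * s * z)
        * sigma t (z - (r + s * t)) / sigma t (z + (r + s * t)) =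
      cexp (-(4 * Real.pi * I * s * z)) *
        (oddTheta t (z - r + -s * t) / oddTheta t (z + r + s * t)) := by
    obtain ⟨c', hc', hσ'⟩ := hsigma.exists_eq_exp_mul_oddTheta hzeta ht (hquasi ht)
    rw [hσ', hσ', mul_div_assoc, mul_div_mul_left _ _ hc', mul_div_mul_comm, ← Complex.exp_sub,
      ← mul_assoc, ← Complex.exp_add]
    ring_nf
  have hm := hasDerivAt_oddTheta_along_line hτ (z - r) (-s)
  have hp := hasDerivAt_oddTheta_along_line hτ (z + r) s
  have em : z - r + -s * τ = z - (r + s * τ) := by ring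
  have ep : z + r + s * τ = z + (r + s * τ) := by ring
  have hderiv := (hm.div hp (by rw [ep]; exact hne hzp)).const_mul
    (cexp (-(4 * Real.pi * I * s * z)))
  rw [hf τ hτ]
  refine (hderiv.congr_of_eventuallyEq ?_).congr_deriv ?_
  · filter_upwards [(isOpen_lt continuous_const continuous_im).mem_nhds hτ] with t ht
    exact hf t ht
  · have hpi : (4 * Real.pi * I : ℂ) ≠ 0 := by simp [Real.pi_ne_zero]
    have hI : I / (4 * Real.pi) = -(1 / (4 * Real.pi * I)) := by
      rw [div_eq_iff (by simp [Real.pi_ne_zero])]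
      field_simp
      rw [I_sq]
    have tm := oddThetaTauDeriv_eq hzeta hsigma hτ hc hσ hzm
    have tp := oddThetaTauDeriv_eq hzeta hsigma hτ hc hσ hzp
    rw [mul_comm, ← eq_div_iff hpi] at tm tp
    rw [em, ep, tm, tp, oddThetaDeriv_eq hsigma hτ hc hσ hzm,
      oddThetaDeriv_eq hsigma hτ hc hσ hzp, hI]
    have hnp := hne hzp
    field_simp
    ring
end

section
/- Fix τ ∈ ℍ and (r,s) ∈ ℂ², set a₁ = r + sτ, and let p ∈ ℂ satisfy the constraint ζ(a₁+p|τ) + ζ(a₁−p|τ) = 2(rη₁(τ) + sη₂(τ)). Assume a₁ ∉ (1/2)Λ_τ, 2p ∉ Λ_τ, and p ∉ {±a₁} + Λ_τ. Then for all z with z ∉ ({±a₁, ±p} + Λ_τ), the identity −(i/(4π))[ζ(z−a₁|τ) + ζ(z+a₁|τ) − 2zη₁(τ)] + (i/(4π))·(℘(z−a₁|τ) − ℘(z+a₁|τ))/(ζ(a₁+p|τ) + ζ(a₁−p|τ) + ζ(z−a₁|τ) − ζ(z+a₁|τ)) = −(i/(4π))(ζ(z−p|τ) + ζ(z+p|τ)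 − 2zη₁(τ)) holds; in particular the left-hand side is holomorphic at z = ±a₁ and has simple poles exactly at {±p} + Λ_τ, each with residue −i/(4π). -/
open Complex Filter Topology Asymptotics

namespace InLattice

variable {τ z w : ℂ}

lemma add (hz : InLattice τ z) (hw : InLattice τ w) : InLattice τ (z + w) := by
  obtain ⟨m, n, rfl⟩ := hz
  obtain ⟨k, l, rfl⟩ := hw
  exact ⟨m + k, n + l, by push_cast; ring⟩

lemma neg (hz : InLattice τ z) : InLattice τ (-z) := by
  obtain ⟨m, n, rfl⟩ := hz
  exact ⟨-m, -n, by push_cast; ring⟩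

lemma neg_iff : InLattice τ (-z) ↔ InLattice τ z :=
  ⟨fun h => by simpa using h.neg, neg⟩

lemma add_iff (hw : InLattice τ w) : InLattice τ (z + w) ↔ InLattice τ z :=
  ⟨fun h => by simpa using h.add hw.neg, fun h => h.add hw⟩

lemma zero (τ : ℂ) : InLattice τ 0 := ⟨0, 0, by simp⟩

lemma one (τ : ℂ) : InLattice τ 1 := ⟨1, 0, by simp⟩

lemma self (τ : ℂ) : InLattice τ τ := ⟨0, 1, by simp⟩

end InLattice

/-- The pair of periods `(1, τ)`. -/
noncomputable def periodPairOfIm (τ : ℂ) (hτ : 0 < τ.im) : PeriodPair where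
  ω₁ := 1
  ω₂ := τ
  indep := by
    rw [LinearIndependent.pair_iff]
    intro s t h
    have ht : t = 0 := by
      have := congrArg Complex.im h
      simpa [hτ.ne'] using this
    subst ht
    have := congrArg Complex.re h
    simpa using this

lemma mem_periodPairOfIm_lattice {τ : ℂ} (hτ : 0 < τ.im) (z : ℂ) :
    z ∈ (periodPairOfIm τ hτ).lattice ↔ InLattice τ z := by
  simp [PeriodPair.mem_lattice, periodPairOfIm, InLattice, eq_comm]

lemma eventually_nhds_not_inLattice {τ z : ℂ} (hτ : 0 < τ.im) (hz : ¬ InLattice τ z) :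
    ∀ᶠ w in 𝓝 z, ¬ InLattice τ w := by
  have := (periodPairOfIm τ hτ).isClosed_lattice.isOpen_compl.mem_nhds
    (x := z) (by simpa [mem_periodPairOfIm_lattice] using hz)
  filter_upwards [this] with w hw
  simpa [mem_periodPairOfIm_lattice] using hw

lemma eventually_nhdsNE_not_inLattice {τ : ℂ} (hτ : 0 < τ.im) (z : ℂ) :
    ∀ᶠ w in 𝓝[≠] z, ¬ InLattice τ w := by
  have := (periodPairOfIm τ hτ).compl_lattice_sdiff_singleton_mem_nhds z
  filter_upwards [nhdsWithin_le_nhds this, self_mem_nhdsWithin] with w hw hne hL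
  exact hw ⟨(mem_periodPairOfIm_lattice hτ w).2 hL, hne⟩

lemma tendsto_add_const_nhdsNE (z c : ℂ) : Tendsto (· + c) (𝓝[≠] z) (𝓝[≠] (z + c)) :=
  ((hasDerivAt_id z).add_const c).tendsto_nhdsNE one_ne_zero

lemma tendsto_neg_nhdsNE (z : ℂ) : Tendsto (- ·) (𝓝[≠] z) (𝓝[≠] (-z)) :=
  (hasDerivAt_neg z).tendsto_nhdsNE (by simp)

lemma eventually_nhdsNE_add_not_inLattice {τ : ℂ} (hτ : 0 < τ.im) (z c : ℂ) :
    ∀ᶠ w in 𝓝[≠] z, ¬ InLattice τ (w + c) :=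
  (tendsto_add_const_nhdsNE z c).eventually (eventually_nhdsNE_not_inLattice hτ (z + c))

/-- `f` has a removable singularity at `z`. -/
def RemovableAt (f : ℂ → ℂ) (z : ℂ) : Prop :=
  ∃ φ : ℂ → ℂ, AnalyticAt ℂ φ z ∧ f =ᶠ[𝓝[≠] z] φ

lemma RemovableAt.add_period {f : ℂ → ℂ} {z c : ℂ} (hf : RemovableAt f z)
    (hper : ∀ᶠ w in 𝓝[≠] z, f (w + c) = f w) : RemovableAt f (z + c) := by
  obtain ⟨φ, hφ, heq⟩ := hf
  refine ⟨fun w => φ (w + -c), ?_, ?_⟩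
  · exact AnalyticAt.fun_comp (by simpa using hφ) (by fun_prop)
  · have ht := tendsto_add_const_nhdsNE (z + c) (-c)
    rw [add_neg_cancel_right] at ht
    filter_upwards [ht.eventually heq, ht.eventually hper] with w h1 h2
    rw [← h1, ← h2]
    simp

lemma RemovableAt.neg_of_odd {f : ℂ → ℂ} {z : ℂ} (hf : RemovableAt f z)
    (hodd : ∀ᶠ w in 𝓝[≠] z, f (-w) = -f w) : RemovableAt f (-z) := by
  obtain ⟨φ, hφ, heq⟩ := hf
  refine ⟨fun w => -φ (-w), ?_, ?_⟩
  · exact (AnalyticAt.fun_comp (g := φ) (by simpa using hφ) (by fun_prop)).neg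
  · have ht := tendsto_neg_nhdsNE (-z)
    rw [neg_neg] at ht
    filter_upwards [ht.eventually heq, ht.eventually hodd] with w h1 h2
    rw [← h1, ← h2, neg_neg]

/-- An odd function which is doubly periodic and has only removable singularities
vanishes wherever it is continuous. -/
lemma eq_zero_of_odd_of_doublyPeriodic {τ : ℂ} (hτ : 0 < τ.im) {h : ℂ → ℂ}
    (hrem : ∀ z, RemovableAt h z)
    (hper : ∀ ω, InLattice τ ω → ∀ z, ∀ᶠ w in 𝓝[≠] z, h (w + ω) = h w)
    (hodd : ∀ z, ∀ᶠ w in 𝓝[≠] z, h (-w) = -h w) {z : ℂ} (hz : ContinuousAt h z) :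
    h z = 0 := by
  set H : ℂ → ℂ := fun z => limUnder (𝓝[≠] z) h
  have hlim : ∀ z φ, AnalyticAt ℂ φ z → h =ᶠ[𝓝[≠] z] φ →
      Tendsto h (𝓝[≠] z) (𝓝 (φ z)) := fun z φ hφ heq =>
    (hφ.continuousAt.tendsto.mono_left nhdsWithin_le_nhds).congr' heq.symm
  have hHlim : ∀ z, Tendsto h (𝓝[≠] z) (𝓝 (H z)) := fun z => by
    obtain ⟨φ, hφ, heq⟩ := hrem z
    exact tendsto_nhds_limUnder ⟨_, hlim z φ hφ heq⟩
  have hHan : ∀ z, AnalyticAt ℂ H z := fun z => by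
    obtain ⟨φ, hφ, heq⟩ := hrem z
    refine hφ.congr ?_
    have h1 := eventually_eventually_nhdsWithin.2 heq
    have h2 : ∀ᶠ w in 𝓝 z, h =ᶠ[𝓝[≠] w] φ := by
      rw [← nhdsNE_sup_pure, eventually_sup]
      refine ⟨?_, by simpa using heq⟩
      filter_upwards [h1, self_mem_nhdsWithin] with w hw hne
      have : 𝓝[≠] w ≤ 𝓝[{z}ᶜ] w := by
        rw [isOpen_compl_singleton.nhdsWithin_eq hne]
        exact nhdsWithin_le_nhds
      exact hw.filter_mono this
    filter_upwards [h2, hφ.eventually_analyticAt] with w hw1 hw2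
    exact tendsto_nhds_unique (hlim w φ hw2 hw1) (hHlim w)
  have hHper : ∀ z ω, ω ∈ (periodPairOfIm τ hτ).lattice → H (z + ω) = H z := fun z ω hω => by
    refine tendsto_nhds_unique (((hHlim (z + ω)).comp (tendsto_add_const_nhdsNE z ω)).congr' ?_)
      (hHlim z)
    exact hper ω ((mem_periodPairOfIm_lattice hτ ω).1 hω) z
  have hHodd : H (-0) = -H 0 :=
    tendsto_nhds_unique (((hHlim (-0)).comp (tendsto_neg_nhdsNE 0)).congr' (hodd 0))
      (hHlim 0).neg
  have hHd : Differentiable ℂ H := fun z => (hHan z).differentiableAt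
  have hconst := hHd.apply_eq_apply_of_bounded
    (IsZLattice.isCompact_range_of_periodic (periodPairOfIm τ hτ).lattice H hHd.continuous
      hHper).isBounded z 0
  rw [neg_zero, eq_neg_iff_add_eq_zero, ← two_mul] at hHodd
  have hH0 : H 0 = 0 := by simpa using hHodd
  rw [← hH0, ← hconst]
  exact tendsto_nhds_unique (hz.tendsto.mono_left nhdsWithin_le_nhds) (hHlim z)

/-- If `f' = -f g` near a zero of `f`, with `g` analytic, then `f` vanishes locally. -/
lemma eventually_eq_zero_of_deriv_eq_neg_mul {f g : ℂ → ℂ} {z : ℂ} (hf : AnalyticAt ℂ f z)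
    (hg : AnalyticAt ℂ g z) (hfg : ∀ᶠ w in 𝓝 z, deriv f w = -(f w * g w)) (hz : f z = 0) :
    ∀ᶠ w in 𝓝 z, f w = 0 := by
  by_contra hne
  obtain ⟨n, k, hk, hk0, heq⟩ := hf.exists_eventuallyEq_pow_smul_nonzero_iff.2 hne
  have hn : n ≠ 0 := by
    rintro rfl
    have := heq.self_of_nhds
    simp [hz] at this
    exact hk0 this.symm
  obtain ⟨m, rfl⟩ := Nat.exists_eq_succ_of_ne_zero hn
  have key : ∀ᶠ w in 𝓝[≠] z,
      (m + 1) * k w + (w - z) * (deriv k w + k w * g w) = 0 := by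
    filter_upwards [nhdsWithin_le_nhds hfg, nhdsWithin_le_nhds heq.eventually_nhds,
      nhdsWithin_le_nhds hk.eventually_analyticAt, self_mem_nhdsWithin] with w h1 h2 h3 h4
    have hd : HasDerivAt (fun w => (w - z) ^ (m + 1) • k w)
        (((m + 1 : ℕ) * (w - z) ^ m * 1) * k w + (w - z) ^ (m + 1) * deriv k w) w := by
      simpa using (((hasDerivAt_id w).sub_const z).fun_pow (m + 1)).fun_mul h3.differentiableAt.hasDerivAt
    have hd' := h1
    rw [EventuallyEq.deriv_eq h2, hd.deriv, h2.self_of_nhds] at hd'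
    have hwz : (w - z) ^ m ≠ 0 := pow_ne_zero _ (sub_ne_zero.2 h4)
    refine mul_left_cancel₀ hwz ?_
    simp only [smul_eq_mul, Nat.succ_eq_add_one] at hd'
    push_cast at hd'
    linear_combination hd'
  have hcont : ContinuousAt (fun w => (m + 1) * k w + (w - z) * (deriv k w + k w * g w)) z := by
    have h1 := hk.continuousAt
    have h2 := hk.deriv.continuousAt
    have h3 := hg.continuousAt
    fun_prop
  have h0 := tendsto_nhds_unique (hcont.tendsto.mono_left nhdsWithin_le_nhds)
    ((tendsto_congr' key).2 tendsto_const_nhds)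
  simp [hk0] at h0
  exact Nat.cast_add_one_ne_zero m h0

lemma AnalyticAt.dslope_self {f : ℂ → ℂ} {z : ℂ} (hf : AnalyticAt ℂ f z) :
    AnalyticAt ℂ (dslope f z) z := by
  obtain ⟨q, hq⟩ := hf
  exact ⟨_, hq.has_fpower_series_dslope_fslope⟩

namespace IsWeierstrassZeta

variable {zeta : ℂ → ℂ → ℂ} {eta1 eta2 : ℂ → ℂ} {τ : ℂ}

lemma analyticAt (hzeta : IsWeierstrassZeta zeta) (hτ : 0 < τ.im) {z : ℂ}
    (hz : ¬ InLattice τ z) : AnalyticAt ℂ (zeta τ) z := by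
  refine Complex.analyticAt_iff_eventually_differentiableAt.2 ?_
  filter_upwards [eventually_nhds_not_inLattice hτ hz] with w hw
  exact ((hzeta τ hτ).2.1 w hw).differentiableAt

lemma analyticAt_wp (hzeta : IsWeierstrassZeta zeta) (hτ : 0 < τ.im) {z : ℂ}
    (hz : ¬ InLattice τ z) : AnalyticAt ℂ (wp τ) z := by
  refine (hzeta.analyticAt hτ hz).deriv.neg.congr ?_
  filter_upwards [eventually_nhds_not_inLattice hτ hz] with w hw
  simp [((hzeta τ hτ).2.1 w hw).deriv]

lemma wp_neg (hzeta : IsWeierstrassZeta zeta) (hτ : 0 < τ.im) {z : ℂ}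
    (hz : ¬ InLattice τ z) : wp τ (-z) = wp τ z := by
  have h1 := ((hzeta τ hτ).2.1 (-z) (by rwa [InLattice.neg_iff])).comp z (hasDerivAt_neg z)
  have h2 := ((hzeta τ hτ).2.1 z hz).fun_neg
  have : zeta τ ∘ Neg.neg = fun w => -zeta τ w := funext fun w => (hzeta τ hτ).1 w
  have h3 := (this ▸ h1).unique h2
  simpa using h3

lemma exists_quasiPeriod (heta1 : IsEta1 zeta eta1) (heta2 : IsEta2 zeta eta2)
    (hτ : 0 < τ.im) {ω : ℂ} (hω : InLattice τ ω) :
    ∃ η, ∀ z, ¬ InLattice τ z → zeta τ (z + ω) = zeta τ z + η := by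
  obtain ⟨m, n, rfl⟩ := hω
  have step : ∀ (c η : ℂ), InLattice τ c →
      (∀ z, ¬ InLattice τ z → zeta τ (z + c) = zeta τ z + η) →
      ∀ (k : ℤ) (z : ℂ), ¬ InLattice τ z → zeta τ (z + k * c) = zeta τ z + k * η := by
    intro c η hc hstep k
    have hmul : ∀ k : ℤ, InLattice τ (k * c) := fun k => by
      obtain ⟨i, j, rfl⟩ := hc
      exact ⟨k * i, k * j, by push_cast; ring⟩
    induction k with
    | zero => simp
    | succ k ih =>
      intro z hz
      have := hstep (z + (k : ℤ) * c) (by rwa [InLattice.add_iff (hmul _)])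
      rw [ih z hz] at this
      push_cast at this ⊢
      rw [show z + (k + 1) * c = z + k * c + c by ring, this]
      ring
    | pred k ih =>
      intro z hz
      have := hstep (z + (-k - 1 : ℤ) * c) (by rwa [InLattice.add_iff (hmul _)])
      rw [show z + ((-k - 1 : ℤ) : ℂ) * c + c = z + (-k : ℤ) * c by push_cast; ring,
        ih z hz] at this
      push_cast at this ⊢
      linear_combination -this
  refine ⟨m * eta1 τ + n * eta2 τ, fun z hz => ?_⟩
  have h1 := step 1 (eta1 τ) (InLattice.one τ)
    (fun w hw => by rw [heta1 τ hτ w hw]; ring) m z hz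
  have h2 := step τ (eta2 τ) (InLattice.self τ)
    (fun w hw => by rw [heta2 τ hτ w hw]; ring) n (z + m * 1)
    (by rwa [InLattice.add_iff ⟨m, 0, by simp⟩])
  rw [h1, mul_one] at h2
  rw [← add_assoc, h2]
  ring

lemma wp_add_period (hzeta : IsWeierstrassZeta zeta) (heta1 : IsEta1 zeta eta1)
    (heta2 : IsEta2 zeta eta2) (hτ : 0 < τ.im) {ω z : ℂ} (hω : InLattice τ ω)
    (hz : ¬ InLattice τ z) : wp τ (z + ω) = wp τ z := by
  obtain ⟨η, hη⟩ := exists_quasiPeriod heta1 heta2 hτ hω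
  have h1 := ((hzeta τ hτ).2.1 (z + ω) (by rwa [InLattice.add_iff hω])).comp_add_const z ω
  have h2 := ((hzeta τ hτ).2.1 z hz).add_const η
  have h3 := h1.unique (h2.congr_of_eventuallyEq
    ((eventually_nhds_not_inLattice hτ hz).mono hη))
  simpa using h3

/-- `ζ` is `1/z` plus an analytic function vanishing at `0`. -/
lemma exists_eq_inv_add (hzeta : IsWeierstrassZeta zeta) (hτ : 0 < τ.im) :
    ∃ κ : ℂ → ℂ, AnalyticAt ℂ κ 0 ∧ κ 0 = 0 ∧
      (∀ z, ¬ InLattice τ z → zeta τ z = z⁻¹ + κ z) ∧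
      (∀ z, ¬ InLattice τ z → wp τ z = z⁻¹ ^ 2 - deriv κ z) := by
  obtain ⟨-, hder, hlim⟩ := hzeta τ hτ
  have hne : ∀ {z}, ¬ InLattice τ z → z ≠ 0 := fun hz h0 => hz (h0 ▸ InLattice.zero τ)
  have hd : ∀ z, ¬ InLattice τ z →
      HasDerivAt (Function.update (fun z => zeta τ z - z⁻¹) 0 0) (-wp τ z + z⁻¹ ^ 2) z := by
    intro z hz
    have := (hder z hz).fun_sub (hasDerivAt_inv (hne hz))
    refine (this.congr_of_eventuallyEq ?_).congr_deriv (by simp)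
    filter_upwards [isOpen_ne.mem_nhds (hne hz)] with w hw
    simp [Function.update_of_ne hw]
  refine ⟨Function.update (fun z => zeta τ z - z⁻¹) 0 0, ?_, by simp,
    fun z hz => by simp [hne hz], fun z hz => by rw [(hd z hz).deriv]; ring⟩
  refine Complex.analyticAt_of_differentiable_on_punctured_nhds_of_continuousAt ?_ ?_
  · filter_upwards [eventually_nhdsNE_not_inLattice hτ 0] with z hz
    exact (hd z hz).differentiableAt
  · exact continuousAt_update_same.2 hlim

lemma tendsto_mul_self (hzeta : IsWeierstrassZeta zeta) (hτ : 0 < τ.im) :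
    Tendsto (fun z => z * zeta τ z) (𝓝[≠] 0) (𝓝 1) := by
  have h := (hzeta τ hτ).2.2
  have hid : Tendsto (fun z : ℂ => z) (𝓝[≠] 0) (𝓝 0) := nhdsWithin_le_nhds
  have := (hid.mul h).add_const 1
  simp only [mul_zero, zero_add] at this
  refine this.congr' ?_
  filter_upwards [self_mem_nhdsWithin] with z hz
  have hz' : z ≠ 0 := hz
  field_simp
  ring

lemma tendsto_sub_mul (hzeta : IsWeierstrassZeta zeta) (hτ : 0 < τ.im) {g : ℂ → ℂ} {b : ℂ}
    (hg : ContinuousAt g b) :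
    Tendsto (fun z => (z - b) * (zeta τ (z - b) + g z)) (𝓝[≠] b) (𝓝 1) := by
  have hsub : Tendsto (fun z => z - b) (𝓝[≠] b) (𝓝[≠] 0) := by
    simpa [sub_eq_add_neg] using tendsto_add_const_nhdsNE b (-b)
  have h1 := (hzeta.tendsto_mul_self hτ).comp hsub
  have h2 := (hsub.mono_right nhdsWithin_le_nhds).mul
    (hg.tendsto.mono_left nhdsWithin_le_nhds)
  simpa [mul_add] using h1.add h2

/-- The defect in the logarithmic derivative formula for
`ζ(z - a) - ζ(z + a) + ζ(a + p) + ζ(a - p)`. -/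
noncomputable def logDerivDefect (Z : ℂ → ℂ) (τ a p z : ℂ) : ℂ :=
  (Z (z - a) - Z (z + a) + (Z (a + p) + Z (a - p))) *
      (Z (z - a) + Z (z + a) - Z (z - p) - Z (z + p))
    - (wp τ (z - a) - wp τ (z + a))

section Defect

variable {a p : ℂ}

lemma analyticAt_defect (hzeta : IsWeierstrassZeta zeta) (hτ : 0 < τ.im)
    {z : ℂ} (h1 : ¬ InLattice τ (z - a)) (h2 : ¬ InLattice τ (z + a))
    (h3 : ¬ InLattice τ (z - p)) (h4 : ¬ InLattice τ (z + p)) :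
    AnalyticAt ℂ (logDerivDefect (zeta τ) τ a p) z := by
  have e1 := hzeta.analyticAt hτ h1
  have e2 := hzeta.analyticAt hτ h2
  have e3 := hzeta.analyticAt hτ h3
  have e4 := hzeta.analyticAt hτ h4
  have e5 := hzeta.analyticAt_wp hτ h1
  have e6 := hzeta.analyticAt_wp hτ h2
  unfold logDerivDefect
  fun_prop

lemma removableAt_defect_left (hzeta : IsWeierstrassZeta zeta) (hτ : 0 < τ.im)
    (h2 : ¬ InLattice τ (a + a)) (h3 : ¬ InLattice τ (a - p)) (h4 : ¬ InLattice τ (a + p)) :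
    RemovableAt (logDerivDefect (zeta τ) τ a p) a := by
  obtain ⟨κ, hκ, hκ0, hκZ, hκP⟩ := hzeta.exists_eq_inv_add hτ
  have e0 : AnalyticAt ℂ κ (a - a) := by simpa using hκ
  have e1 : AnalyticAt ℂ (deriv κ) (a - a) := by simpa using hκ.deriv
  have e2 := hzeta.analyticAt hτ h2
  have e3 := hzeta.analyticAt hτ h3
  have e4 := hzeta.analyticAt hτ h4
  have e6 := hzeta.analyticAt_wp hτ h2
  set F : ℂ → ℂ := fun z => κ (z - a) - zeta τ (z + a) + (zeta τ (a + p) + zeta τ (a - p))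
  set G : ℂ → ℂ := fun z => κ (z - a) + zeta τ (z + a) - zeta τ (z - p) - zeta τ (z + p)
  have hF : AnalyticAt ℂ F a := by fun_prop
  have hG : AnalyticAt ℂ G a := by fun_prop
  have hFG : F a + G a = 0 := by
    simp only [F, G, sub_self, hκ0]
    ring
  have hs : AnalyticAt ℂ (dslope (fun z => F z + G z) a) a :=
    AnalyticAt.dslope_self (by fun_prop)
  refine ⟨fun z => dslope (fun z => F z + G z) a z + F z * G z + deriv κ (z - a) + wp τ (z + a),
    by fun_prop, ?_⟩
  filter_upwards [eventually_nhdsNE_add_not_inLattice hτ a (-a), self_mem_nhdsWithin]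
    with z hz hne
  rw [← sub_eq_add_neg] at hz
  rw [dslope_of_ne _ hne, slope_def_field, hFG, logDerivDefect, hκZ _ hz, hκP _ hz]
  simp only [F, G]
  ring

lemma removableAt_defect_right (hzeta : IsWeierstrassZeta zeta) (hτ : 0 < τ.im)
    (h1 : ¬ InLattice τ (p - a)) (h2 : ¬ InLattice τ (p + a)) (h4 : ¬ InLattice τ (p + p)) :
    RemovableAt (logDerivDefect (zeta τ) τ a p) p := by
  obtain ⟨κ, hκ, -, hκZ, -⟩ := hzeta.exists_eq_inv_add hτ
  have e0 : AnalyticAt ℂ κ (p - p) := by simpa using hκ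
  have e1 := hzeta.analyticAt hτ h1
  have e2 := hzeta.analyticAt hτ h2
  have e4 := hzeta.analyticAt hτ h4
  have e5 := hzeta.analyticAt_wp hτ h1
  have e6 := hzeta.analyticAt_wp hτ h2
  set F : ℂ → ℂ :=
    fun z => zeta τ (z - a) - zeta τ (z + a) + (zeta τ (a + p) + zeta τ (a - p))
  have hF : AnalyticAt ℂ F p := by fun_prop
  have hFp : F p = 0 := by
    simp only [F]
    rw [← neg_sub a p, (hzeta τ hτ).1, add_comm p a]
    ring
  have hs := hF.dslope_self
  refine ⟨fun z => -dslope F p z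
    + F z * (zeta τ (z - a) + zeta τ (z + a) - κ (z - p) - zeta τ (z + p))
    - (wp τ (z - a) - wp τ (z + a)), by fun_prop, ?_⟩
  filter_upwards [eventually_nhdsNE_add_not_inLattice hτ p (-p), self_mem_nhdsWithin]
    with z hz hne
  rw [← sub_eq_add_neg] at hz
  rw [dslope_of_ne _ hne, slope_def_field, hFp, logDerivDefect, hκZ _ hz]
  simp only [F]
  ring

lemma defect_neg (hzeta : IsWeierstrassZeta zeta) (hτ : 0 < τ.im) {z : ℂ}
    (h1 : ¬ InLattice τ (z - a)) (h2 : ¬ InLattice τ (z + a)) :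
    logDerivDefect (zeta τ) τ a p (-z) = -logDerivDefect (zeta τ) τ a p z := by
  have hneg := (hzeta τ hτ).1
  simp only [logDerivDefect]
  rw [show -z - a = -(z + a) by ring, show -z + a = -(z - a) by ring,
    show -z - p = -(z + p) by ring, show -z + p = -(z - p) by ring,
    hneg, hneg, hneg, hneg, hzeta.wp_neg hτ h1, hzeta.wp_neg hτ h2]
  ring

lemma defect_add_period (hzeta : IsWeierstrassZeta zeta) (heta1 : IsEta1 zeta eta1)
    (heta2 : IsEta2 zeta eta2) (hτ : 0 < τ.im) {ω z : ℂ} (hω : InLattice τ ω)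
    (h1 : ¬ InLattice τ (z - a)) (h2 : ¬ InLattice τ (z + a))
    (h3 : ¬ InLattice τ (z - p)) (h4 : ¬ InLattice τ (z + p)) :
    logDerivDefect (zeta τ) τ a p (z + ω) = logDerivDefect (zeta τ) τ a p z := by
  obtain ⟨η, hη⟩ := exists_quasiPeriod heta1 heta2 hτ hω
  simp only [logDerivDefect]
  rw [add_sub_right_comm z ω a, add_sub_right_comm z ω p, add_right_comm z ω a,
    add_right_comm z ω p, hη _ h1, hη _ h2, hη _ h3, hη _ h4,
    hzeta.wp_add_period heta1 heta2 hτ hω h1, hzeta.wp_add_period heta1 heta2 hτ hω h2]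
  ring

lemma removableAt_defect (hzeta : IsWeierstrassZeta zeta) (heta1 : IsEta1 zeta eta1)
    (heta2 : IsEta2 zeta eta2) (hτ : 0 < τ.im) (ha : ¬ InLattice τ (a + a))
    (hp : ¬ InLattice τ (p + p)) (hpa1 : ¬ InLattice τ (p - a)) (hpa2 : ¬ InLattice τ (p + a))
    (z : ℂ) : RemovableAt (logDerivDefect (zeta τ) τ a p) z := by
  have hav : ∀ z : ℂ, ∀ᶠ w in 𝓝[≠] z, ¬ InLattice τ (w - a) ∧ ¬ InLattice τ (w + a) ∧
      ¬ InLattice τ (w - p) ∧ ¬ InLattice τ (w + p) := fun z => by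
    filter_upwards [eventually_nhdsNE_add_not_inLattice hτ z (-a),
      eventually_nhdsNE_add_not_inLattice hτ z a, eventually_nhdsNE_add_not_inLattice hτ z (-p),
      eventually_nhdsNE_add_not_inLattice hτ z p] with w h1 h2 h3 h4
    exact ⟨by rwa [sub_eq_add_neg], h2, by rwa [sub_eq_add_neg], h4⟩
  have htrans : ∀ b, RemovableAt (logDerivDefect (zeta τ) τ a p) b → InLattice τ (z - b) →
      RemovableAt (logDerivDefect (zeta τ) τ a p) z := fun b hb hL => by
    have := hb.add_period (c := z - b) ((hav b).mono fun w ⟨h1, h2, h3, h4⟩ =>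
      hzeta.defect_add_period heta1 heta2 hτ hL h1 h2 h3 h4)
    rwa [add_sub_cancel] at this
  have hneg : ∀ b, RemovableAt (logDerivDefect (zeta τ) τ a p) b →
      RemovableAt (logDerivDefect (zeta τ) τ a p) (-b) := fun b hb =>
    hb.neg_of_odd ((hav b).mono fun w ⟨h1, h2, _, _⟩ => hzeta.defect_neg hτ h1 h2)
  have hA : RemovableAt (logDerivDefect (zeta τ) τ a p) a :=
    hzeta.removableAt_defect_left hτ ha (by rwa [← InLattice.neg_iff, neg_sub])
      (by rwa [add_comm])
  have hP := hzeta.removableAt_defect_right hτ hpa1 hpa2 hp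
  by_cases h1 : InLattice τ (z - a)
  · exact htrans a hA h1
  by_cases h2 : InLattice τ (z + a)
  · exact htrans (-a) (hneg a hA) (by rwa [sub_neg_eq_add])
  by_cases h3 : InLattice τ (z - p)
  · exact htrans p hP h3
  by_cases h4 : InLattice τ (z + p)
  · exact htrans (-p) (hneg p hP) (by rwa [sub_neg_eq_add])
  exact ⟨_, hzeta.analyticAt_defect hτ h1 h2 h3 h4, .rfl⟩

lemma defect_eq_zero (hzeta : IsWeierstrassZeta zeta) (heta1 : IsEta1 zeta eta1)
    (heta2 : IsEta2 zeta eta2) (hτ : 0 < τ.im) (ha : ¬ InLattice τ (a + a))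
    (hp : ¬ InLattice τ (p + p)) (hpa1 : ¬ InLattice τ (p - a)) (hpa2 : ¬ InLattice τ (p + a))
    {z : ℂ} (h1 : ¬ InLattice τ (z - a)) (h2 : ¬ InLattice τ (z + a))
    (h3 : ¬ InLattice τ (z - p)) (h4 : ¬ InLattice τ (z + p)) :
    logDerivDefect (zeta τ) τ a p z = 0 := by
  refine eq_zero_of_odd_of_doublyPeriodic hτ
    (hzeta.removableAt_defect heta1 heta2 hτ ha hp hpa1 hpa2) (fun ω hω z => ?_) (fun z => ?_)
    (hzeta.analyticAt_defect hτ h1 h2 h3 h4).continuousAt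
  · filter_upwards [eventually_nhdsNE_add_not_inLattice hτ z (-a),
      eventually_nhdsNE_add_not_inLattice hτ z a, eventually_nhdsNE_add_not_inLattice hτ z (-p),
      eventually_nhdsNE_add_not_inLattice hτ z p] with w h1 h2 h3 h4
    rw [← sub_eq_add_neg] at h1 h3
    exact hzeta.defect_add_period heta1 heta2 hτ hω h1 h2 h3 h4
  · filter_upwards [eventually_nhdsNE_add_not_inLattice hτ z (-a),
      eventually_nhdsNE_add_not_inLattice hτ z a] with w h1 h2
    rw [← sub_eq_add_neg] at h1
    exact hzeta.defect_neg hτ h1 h2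

/-- `ζ(z - a) - ζ(z + a) + c` vanishes identically near no regular point. -/
lemma not_eventually_eq_zero (hzeta : IsWeierstrassZeta zeta) (hτ : 0 < τ.im)
    (ha : ¬ InLattice τ (a + a)) (c : ℂ) {z : ℂ} (h1 : ¬ InLattice τ (z - a))
    (h2 : ¬ InLattice τ (z + a)) :
    ¬ ∀ᶠ w in 𝓝 z, zeta τ (w - a) - zeta τ (w + a) + c = 0 := by
  intro h0
  set U : Set ℂ := {w | InLattice τ (w - a) ∨ InLattice τ (w + a)}ᶜ
  have hcount : {w | InLattice τ (w - a) ∨ InLattice τ (w + a)}.Countable := by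
    refine Set.Countable.mono (s₂ :=
      Set.range (fun x : ℤ × ℤ => (x.1 : ℂ) + x.2 * τ + a) ∪
      Set.range (fun x : ℤ × ℤ => (x.1 : ℂ) + x.2 * τ - a)) ?_
      ((Set.countable_range _).union (Set.countable_range _))
    rintro w (⟨m, n, h⟩ | ⟨m, n, h⟩)
    · exact Or.inl ⟨(m, n), by simp [← h]⟩
    · exact Or.inr ⟨(m, n), by simp [← h]⟩
  have hconn : IsPreconnected U :=
    (hcount.isConnected_compl_of_one_lt_rank (by simp)).isPreconnected
  have han : AnalyticOnNhd ℂ (fun w => zeta τ (w - a) - zeta τ (w + a) + c) U := by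
    intro w hw
    obtain ⟨hw1, hw2⟩ := not_or.1 hw
    have e1 := hzeta.analyticAt hτ hw1
    have e2 := hzeta.analyticAt hτ hw2
    fun_prop
  have hzero := han.eqOn_zero_of_preconnected_of_eventuallyEq_zero hconn (not_or.2 ⟨h1, h2⟩) h0
  have e2 := hzeta.analyticAt hτ ha
  have hlim := hzeta.tendsto_sub_mul hτ (b := a) (g := fun w => -zeta τ (w + a) + c)
    (by have := e2.continuousAt; fun_prop)
  refine zero_ne_one (tendsto_nhds_unique ((tendsto_congr' ?_).2 tendsto_const_nhds) hlim)
  filter_upwards [eventually_nhdsNE_add_not_inLattice hτ a (-a),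
    eventually_nhdsNE_add_not_inLattice hτ a a] with w hw1 hw2
  rw [← sub_eq_add_neg] at hw1
  have := hzero (not_or.2 ⟨hw1, hw2⟩ : w ∈ U)
  simp only [Pi.zero_apply] at this
  rw [← add_assoc, ← sub_eq_add_neg, this, mul_zero]

lemma denominator_ne_zero (hzeta : IsWeierstrassZeta zeta) (heta1 : IsEta1 zeta eta1)
    (heta2 : IsEta2 zeta eta2) (hτ : 0 < τ.im) (ha : ¬ InLattice τ (a + a))
    (hp : ¬ InLattice τ (p + p)) (hpa1 : ¬ InLattice τ (p - a)) (hpa2 : ¬ InLattice τ (p + a))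
    {z : ℂ} (h1 : ¬ InLattice τ (z - a)) (h2 : ¬ InLattice τ (z + a))
    (h3 : ¬ InLattice τ (z - p)) (h4 : ¬ InLattice τ (z + p)) :
    zeta τ (z - a) - zeta τ (z + a) + (zeta τ (a + p) + zeta τ (a - p)) ≠ 0 := by
  intro h0
  have e1 := hzeta.analyticAt hτ h1
  have e2 := hzeta.analyticAt hτ h2
  have e3 := hzeta.analyticAt hτ h3
  have e4 := hzeta.analyticAt hτ h4
  refine hzeta.not_eventually_eq_zero hτ ha _ h1 h2
    (eventually_eq_zero_of_deriv_eq_neg_mul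
      (f := fun z => zeta τ (z - a) - zeta τ (z + a) + (zeta τ (a + p) + zeta τ (a - p)))
      (g := fun z => zeta τ (z - a) + zeta τ (z + a) - zeta τ (z - p) - zeta τ (z + p))
      (by fun_prop) (by fun_prop) ?_ h0)
  have hav : ∀ b, ¬ InLattice τ (z + b) → ∀ᶠ w in 𝓝 z, ¬ InLattice τ (w + b) := fun b hb =>
    (continuous_add_const b).continuousAt.eventually (eventually_nhds_not_inLattice hτ hb)
  filter_upwards [hav (-a) (by rwa [← sub_eq_add_neg]), hav a h2,
    hav (-p) (by rwa [← sub_eq_add_neg]), hav p h4] with w w1 w2 w3 w4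
  rw [← sub_eq_add_neg] at w1 w3
  have hd := ((((hzeta τ hτ).2.1 _ w1).comp_sub_const w a).fun_sub
    (((hzeta τ hτ).2.1 _ w2).comp_add_const w a)).add_const (zeta τ (a + p) + zeta τ (a - p))
  have hdef := hzeta.defect_eq_zero heta1 heta2 hτ ha hp hpa1 hpa2 w1 w2 w3 w4
  rw [hd.deriv, sub_eq_zero.1 hdef]
  ring

end Defect

end IsWeierstrassZeta

/-- formula (175) and its simplification: under the constraint
`ζ(a₁+p) + ζ(a₁-p) = 2(rη₁ + sη₂)` with `a₁ = r + sτ`, the function `Ω₁₂` of (175) equals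
`-(i/(4π))(ζ(z-p) + ζ(z+p) - 2zη₁)`; in particular the latter is holomorphic at `±a₁` and
has simple poles at `{±p} + Λ_τ` with residue `-i/(4π)`. -/
theorem Omega12_identity
    (τ : ℂ) (hτ : 0 < τ.im) (r s p : ℂ)
    (zeta : ℂ → ℂ → ℂ) (eta1 eta2 : ℂ → ℂ)
    (hzeta : IsWeierstrassZeta zeta) (heta1 : IsEta1 zeta eta1) (heta2 : IsEta2 zeta eta2)
    (ha : ¬ InLattice τ (2 * (r + s * τ)))
    (hp : ¬ InLattice τ (2 * p))
    (hpa1 : ¬ InLattice τ (p - (r + s * τ)))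
    (hpa2 : ¬ InLattice τ (p + (r + s * τ)))
    (hcon : zeta τ ((r + s * τ) + p) + zeta τ ((r + s * τ) - p)
      = 2 * (r * eta1 τ + s * eta2 τ)) :
    (∀ z : ℂ, ¬ InLattice τ (z - (r + s * τ)) → ¬ InLattice τ (z + (r + s * τ)) →
      ¬ InLattice τ (z - p) → ¬ InLattice τ (z + p) →
      -(Complex.I / (4 * (Real.pi : ℂ))) *
          (zeta τ (z - (r + s * τ)) + zeta τ (z + (r + s * τ)) - 2 * z * eta1 τ)
        + (Complex.I / (4 * (Real.pi : ℂ))) *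
            (wp τ (z - (r + s * τ)) - wp τ (z + (r + s * τ)))
          / (zeta τ ((r + s * τ) + p) + zeta τ ((r + s * τ) - p)
              + zeta τ (z - (r + s * τ)) - zeta τ (z + (r + s * τ)))
      = -(Complex.I / (4 * (Real.pi : ℂ))) *
          (zeta τ (z - p) + zeta τ (z + p) - 2 * z * eta1 τ)) ∧
    AnalyticAt ℂ (fun z => -(Complex.I / (4 * (Real.pi : ℂ))) *
      (zeta τ (z - p) + zeta τ (z + p) - 2 * z * eta1 τ)) (r + s * τ) ∧
    AnalyticAt ℂ (fun z => -(Complex.I / (4 * (Real.pi : ℂ))) *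
      (zeta τ (z - p) + zeta τ (z + p) - 2 * z * eta1 τ)) (-(r + s * τ)) ∧
    Tendsto (fun z => (z - p) * (-(Complex.I / (4 * (Real.pi : ℂ))) *
        (zeta τ (z - p) + zeta τ (z + p) - 2 * z * eta1 τ)))
      (𝓝[≠] p) (𝓝 (-Complex.I / (4 * (Real.pi : ℂ)))) ∧
    Tendsto (fun z => (z + p) * (-(Complex.I / (4 * (Real.pi : ℂ))) *
        (zeta τ (z - p) + zeta τ (z + p) - 2 * z * eta1 τ)))
      (𝓝[≠] (-p)) (𝓝 (-Complex.I / (4 * (Real.pi : ℂ)))) := by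
  generalize r + s * τ = a at *
  rw [two_mul] at ha hp
  have hreg : ∀ b : ℂ, ¬ InLattice τ (b - p) → ¬ InLattice τ (b + p) →
      AnalyticAt ℂ (fun z => -(Complex.I / (4 * (Real.pi : ℂ))) *
        (zeta τ (z - p) + zeta τ (z + p) - 2 * z * eta1 τ)) b := by
    intro b h1 h2
    have e1 := hzeta.analyticAt hτ h1
    have e2 := hzeta.analyticAt hτ h2
    fun_prop
  refine ⟨fun z h1 h2 h3 h4 => ?_, hreg _ ?_ ?_, hreg _ ?_ ?_, ?_, ?_⟩
  · have hne := hzeta.denominator_ne_zero heta1 heta2 hτ ha hp hpa1 hpa2 h1 h2 h3 h4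
    have hdef := sub_eq_zero.1 (hzeta.defect_eq_zero heta1 heta2 hτ ha hp hpa1 hpa2 h1 h2 h3 h4)
    rw [show zeta τ (a + p) + zeta τ (a - p) + zeta τ (z - a) - zeta τ (z + a)
      = zeta τ (z - a) - zeta τ (z + a) + (zeta τ (a + p) + zeta τ (a - p)) by ring, ← hdef,
      mul_left_comm, mul_div_cancel_left₀ _ hne]
    ring
  · rwa [← InLattice.neg_iff, neg_sub]
  · rwa [add_comm]
  · rwa [← InLattice.neg_iff, neg_sub, sub_neg_eq_add]
  · rwa [neg_add_eq_sub]
  · have e := hzeta.analyticAt hτ hp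
    have hlim := (hzeta.tendsto_sub_mul hτ (b := p)
      (g := fun z => zeta τ (z + p) - 2 * z * eta1 τ)
      (by have := e.continuousAt; fun_prop)).const_mul (-(Complex.I / (4 * (Real.pi : ℂ))))
    rw [mul_one, ← neg_div] at hlim
    refine hlim.congr fun z => ?_
    ring
  · have hp' : ¬ InLattice τ (-p - p) := by
      rwa [← InLattice.neg_iff, neg_sub, sub_neg_eq_add]
    have e := hzeta.analyticAt hτ hp'
    have hlim := (hzeta.tendsto_sub_mul hτ (b := -p)
      (g := fun z => zeta τ (z - p) - 2 * z * eta1 τ)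
      (by have := e.continuousAt; fun_prop)).const_mul (-(Complex.I / (4 * (Real.pi : ℂ))))
    rw [mul_one, ← neg_div] at hlim
    refine hlim.congr fun z => ?_
    rw [sub_neg_eq_add]
    ring
end
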